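/- If h(x) = ℓ_1(x)⋯ℓ_d(x) is a product of linear forms with h(e) ≠ 0, then for every 1 ≤ k ≤ d−1 the hyperbolicity cone Λ₊(D_e^k h, e) of the k-th directional derivative is spectrahedral. -/

import Mathlib

open MvPolynomial

/-- The directional derivative `D_e h = Σ_i e_i ∂h/∂x_i`. -/
noncomputable def dirDeriv {n : ℕ} (e : Fin n → ℝ) (h : MvPolynomial (Fin n) ℝ) :
    MvPolynomial (Fin n) ℝ :=
  ∑ i, C (e i) * pderiv i h

/-- The hyperbolicity cone: the closure of the connected component of `{x : h(x) ≠ 0}`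
containing `e`. -/
noncomputable def hypCone {n : ℕ} (h : MvPolynomial (Fin n) ℝ) (e : Fin n → ℝ) :
    Set (Fin n → ℝ) :=
  closure (connectedComponentIn {x | eval x h ≠ 0} e)

namespace Polynomial

noncomputable def es {ι : Type} (S : Finset ι) (y : ι → ℝ) (j : ℕ) : ℝ :=
  Polynomial.coeff (∏ i ∈ S, (1 + Polynomial.C (y i) * Polynomial.X)) j

lemma es_zero {ι : Type} (S : Finset ι) (y : ι → ℝ) : es S y 0 = 1 := by
  unfold es
  rw [Polynomial.coeff_zero_eq_eval_zero, Polynomial.eval_prod]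
  simp

lemma es_insert {ι : Type} [DecidableEq ι] {S : Finset ι} {a : ι} (h : a ∉ S) (y : ι → ℝ) (j : ℕ) :
    es (insert a S) y (j+1) = es S y (j+1) + y a * es S y j := by
  unfold es
  rw [Finset.prod_insert h, add_mul, one_mul, mul_assoc, Polynomial.coeff_add,
    Polynomial.coeff_C_mul, Polynomial.coeff_X_mul]

lemma es_erase {ι : Type} [DecidableEq ι] {S : Finset ι} {a : ι} (h : a ∈ S) (y : ι → ℝ) (j : ℕ) :
    es S y (j+1) = es (S.erase a) y (j+1) + y a * es (S.erase a) y j := by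
  conv_lhs => rw [← Finset.insert_erase h]
  exact es_insert (Finset.notMem_erase a S) y j

lemma es_empty {ι : Type} (y : ι → ℝ) (j : ℕ) : es (∅ : Finset ι) y (j+1) = 0 := by
  simp [es, Polynomial.coeff_one]

lemma es_euler {ι : Type} [DecidableEq ι] (S : Finset ι) (y : ι → ℝ) (m : ℕ) :
    ∑ i ∈ S, y i * es (S.erase i) y m = (m+1) * es S y (m+1) := by
  induction S using Finset.induction_on generalizing m with
  | empty => simp [es_empty]
  | insert a S ha ih =>
    rw [Finset.sum_insert ha, Finset.erase_insert ha]
    have e1 : ∀ i ∈ S, (insert a S).erase i = insert a (S.erase i) := fun i hi =>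
      Finset.erase_insert_of_ne (fun h => ha (h ▸ hi))
    cases m with
    | zero =>
      have := ih 0
      simp only [es_zero, es_insert ha] at *
      push_cast at *
      linarith
    | succ m =>
      have : ∀ i ∈ S, y i * es ((insert a S).erase i) y (m+1) =
          y i * es (S.erase i) y (m+1) + y a * (y i * es (S.erase i) y m) := by
        intro i hi
        rw [e1 i hi, es_insert (fun h => ha (Finset.mem_of_mem_erase h))]
        ring
      rw [Finset.sum_congr rfl this, Finset.sum_add_distrib, ← Finset.mul_sum, ih, ih, es_insert ha]
      push_cast
      ring

lemma es_coeff {ι : Type} [DecidableEq ι] (S : Finset ι) (y : ι → ℝ) (j k : ℕ) (h : k + j = S.card) :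
    (∏ i ∈ S, (Polynomial.X + Polynomial.C (y i))).coeff k = es S y j := by
  induction S using Finset.induction_on generalizing j k with
  | empty =>
    simp at h
    obtain ⟨rfl, rfl⟩ := h
    simp [es]
  | insert a S ha ih =>
    rw [Finset.card_insert_of_notMem ha] at h
    rw [Finset.prod_insert ha, add_mul, Polynomial.coeff_add, Polynomial.coeff_C_mul]
    have hdeg : (∏ i ∈ S, (Polynomial.X + Polynomial.C (y i))).natDegree ≤ S.card := by
      refine (Polynomial.natDegree_prod_le _ _).trans ?_
      simp
    rcases j with _ | j
    · have : k = S.card + 1 := by omega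
      subst this
      rw [Polynomial.coeff_X_mul, Polynomial.coeff_eq_zero_of_natDegree_lt (n := S.card + 1) (by omega),
        ih 0 _ (by simp), es_zero, es_zero]
      simp
    · rw [es_insert ha, ← ih j k (by omega)]
      congr 1
      rcases k with _ | k
      · rw [Polynomial.mul_coeff_zero]
        simp
        have hd : (∏ i ∈ S, (1 + Polynomial.C (y i) * Polynomial.X)).natDegree ≤ S.card := by
          refine (Polynomial.natDegree_prod_le _ _).trans ?_
          calc _ ≤ ∑ i ∈ S, 1 := Finset.sum_le_sum (fun i _ => by compute_degree)
            _ = _ := by simp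
        rw [es, Polynomial.coeff_eq_zero_of_natDegree_lt (by omega)]
      · rw [Polynomial.coeff_X_mul, ih (j+1) k (by omega)]

/-- Laguerre's inequality. -/
lemma laguerre (s : Multiset ℝ) (x : ℝ) :
    0 ≤ (derivative (s.map (fun a => X - C a)).prod).eval x ^ 2 -
      (s.map (fun a => (X - C a : ℝ[X]))).prod.eval x *
      (derivative (derivative (s.map (fun a => X - C a)).prod)).eval x := by
  induction s using Multiset.induction_on with
  | empty => simp
  | cons a s ih =>
    simp only [Multiset.map_cons, Multiset.prod_cons]
    set g := (s.map (fun a => (X - C a : ℝ[X]))).prod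
    simp [derivative_mul]
    nlinarith [sq_nonneg (g.eval x), mul_nonneg (sq_nonneg (x - a)) ih]

lemma splits_deriv {p : ℝ[X]} (hp : p.Splits) : (derivative p).Splits := by
  rcases Nat.eq_zero_or_pos p.natDegree with h0 | h0
  · rw [Polynomial.derivative_of_natDegree_zero h0]; exact Splits.zero
  rw [splits_iff_card_roots] at *
  have h1 := card_roots_le_derivative p
  have h2 := Polynomial.card_roots' (derivative p)
  have h3 := Polynomial.natDegree_derivative_lt (p := p) (by omega)
  omega

lemma splits_hasse {p : ℝ[X]} (hp : p.Splits) (k : ℕ) : (hasseDeriv k p).Splits := by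
  have h : ((derivative)^[k] p).Splits := by
    induction k with
    | zero => simpa
    | succ k ih => rw [Function.iterate_succ_apply']; exact splits_deriv ih
  rw [← factorial_smul_hasseDeriv] at h
  have hk : (k.factorial : ℝ) ≠ 0 := by exact_mod_cast k.factorial_ne_zero
  have : hasseDeriv k p = C ((k.factorial : ℝ)⁻¹) * ((k.factorial • (hasseDeriv k : ℝ[X] →ₗ[ℝ] ℝ[X])) p) := by
    rw [LinearMap.smul_apply, nsmul_eq_mul, ← mul_assoc, ← C_eq_natCast, ← C_mul, inv_mul_cancel₀ hk]
    simp
  rw [this]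
  exact h.C_mul _

lemma newton_poly {p : ℝ[X]} (hp : p.Splits) (k : ℕ) :
    p.coeff k * p.coeff (k+2) ≤ p.coeff (k+1) ^ 2 := by
  have hq := splits_hasse hp k
  have hL := laguerre (hasseDeriv k p).roots 0
  have he := hq.eq_prod_roots
  set q := hasseDeriv k p
  set g := (q.roots.map (fun a => (X - C a : ℝ[X]))).prod
  have h2 : 0 ≤ (derivative q).eval 0 ^ 2 - q.eval 0 * (derivative (derivative q)).eval 0 := by
    rw [he]
    simp only [derivative_mul, derivative_C, zero_mul, zero_add, eval_mul, eval_C]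
    nlinarith [mul_nonneg (sq_nonneg q.leadingCoeff) hL]
  simp only [← coeff_zero_eq_eval_zero, coeff_derivative, q, hasseDeriv_coeff] at h2
  have c1 : ((0 + 1 + k).choose k : ℝ) = k + 1 := by
    rw [show 0+1+k = k+1 by ring, Nat.choose_succ_self_right]; push_cast; ring
  have c2 : ((0 + 1 + 1 + k).choose k : ℝ) * 2 = (k + 1) * (k+2) := by
    have := Nat.add_one_mul_choose_eq (k+1) k
    rw [show 0+1+1+k = k+1+1 by ring]
    have e := Nat.choose_symm_of_eq_add (n := k+1+1) (a := k) (b := 2) (by ring)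
    rw [e, Nat.cast_choose_two]
    push_cast; ring
  simp only [c1] at h2
  have c2' : ((0 + 1 + 1 + k).choose k : ℝ) = (k + 1) * (k+2) / 2 := by linarith
  rw [c2'] at h2
  simp at h2
  rw [show 1 + 1 + k = k+2 by ring, show 1 + k = k + 1 by ring] at h2
  by_contra hcon
  push Not at hcon
  have hk : (0:ℝ) ≤ k := Nat.cast_nonneg k
  nlinarith [mul_pos (show (0:ℝ) < (k+1)^2 by positivity) (sub_pos.2 hcon), mul_nonneg (show (0:ℝ) ≤ k+1 by positivity) (le_trans (sq_nonneg (p.coeff (k+1))) hcon.le)]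

lemma splits_one_add (a : ℝ) : (1 + C a * X : ℝ[X]).Splits :=
  Splits.of_natDegree_le_one (by compute_degree)

lemma newton_es {ι : Type} (S : Finset ι) (y : ι → ℝ) (k : ℕ) :
    es S y k * es S y (k+2) ≤ es S y (k+1) ^ 2 :=
  newton_poly (Splits.prod fun i _ => splits_one_add (y i)) k

/-- the open cone -/
def Cn {ι : Type} (S : Finset ι) (m : ℕ) (y : ι → ℝ) : Prop := ∀ j ≤ m, 0 < es S y j

lemma Cn_erase {ι : Type} [DecidableEq ι] {S : Finset ι} {m : ℕ} {y : ι → ℝ} (h : Cn S (m+1) y)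
    {a : ι} (ha : a ∈ S) : Cn (S.erase a) m y := by
  intro j
  induction j with
  | zero => intro _; rw [es_zero]; exact one_pos
  | succ j ih =>
    intro hj
    have h0 := ih (by omega)
    have h1 := h (j+1) (by omega)
    have h2 := h (j+2) (by omega)
    rw [es_erase ha] at h1 h2
    have hN := newton_es (S.erase a) y j
    by_contra hb
    push Not at hb
    nlinarith [mul_pos h0 h2, mul_nonneg (neg_nonneg.2 hb) h1.le]

end Polynomial

namespace Polynomial

structure Rep {ι : Type} [Fintype ι] (m : ℕ) (S : Finset ι) where
  V : Type
  [ag : AddCommGroup V]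
  [md : Module ℝ V]
  [fd : FiniteDimensional ℝ V]
  u : V →ₗ[ℝ] ℝ
  E : ι → QuadraticForm ℝ V
  pos : ∀ v ≠ 0, 0 < ∑ j, E j v
  low : ∀ y, Cn S (m+1) y → ∀ v, es S y (m+1) / es S y m * (u v)^2 ≤ ∑ j, y j * E j v
  att : ∀ y, Cn S (m+1) y → ∃ v, u v = 1 ∧ ∑ j, y j * E j v = es S y (m+1) / es S y m

attribute [instance] Rep.ag Rep.md Rep.fd

lemma es_one {ι : Type} [DecidableEq ι] (S : Finset ι) (y : ι → ℝ) : es S y 1 = ∑ i ∈ S, y i := by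
  have := es_euler S y 0
  simp [es_zero] at this
  exact this.symm

noncomputable def stepE {ι : Type} [Fintype ι] [DecidableEq ι] {m : ℕ} {S : Finset ι}
    (R : ∀ i : S, Rep m (S.erase i.1)) (j : ι) : QuadraticForm ℝ (ℝ × (∀ i : S, (R i).V)) :=
  (1 / (m + 2 : ℝ)) • ∑ i : S,
    ((if i.1 = j then (QuadraticMap.sq (R := ℝ)).comp (LinearMap.fst ℝ ℝ (∀ i : S, (R i).V) -
      (R i).u ∘ₗ (LinearMap.proj i) ∘ₗ (LinearMap.snd ℝ ℝ (∀ i : S, (R i).V))) else 0) +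
    ((R i).E j).comp ((LinearMap.proj i) ∘ₗ (LinearMap.snd ℝ ℝ (∀ i : S, (R i).V))))

lemma stepE_sum {ι : Type} [Fintype ι] [DecidableEq ι] {m : ℕ} {S : Finset ι}
    (R : ∀ i : S, Rep m (S.erase i.1)) (y : ι → ℝ) (v : ℝ × (∀ i : S, (R i).V)) :
    ∑ j, y j * stepE R j v = (1 / (m + 2 : ℝ)) * ∑ i : S,
      (y i.1 * (v.1 - (R i).u (v.2 i))^2 + ∑ j, y j * (R i).E j (v.2 i)) := by
  have h : ∀ j, stepE R j v = (1 / (m + 2 : ℝ)) * ∑ i : S,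
      ((if i.1 = j then (v.1 - (R i).u (v.2 i))^2 else 0) + (R i).E j (v.2 i)) := by
    intro j
    unfold stepE
    rw [_root_.smul_apply, _root_.sum_apply, smul_eq_mul]
    congr 1
    refine Finset.sum_congr rfl fun i _ => ?_
    rw [_root_.add_apply]
    congr 1
    split_ifs
    · simp [QuadraticMap.comp_apply, pow_two]
    · simp
  simp only [h, Finset.mul_sum]
  rw [Finset.sum_comm]
  refine Finset.sum_congr rfl fun i _ => ?_
  rw [mul_add, Finset.mul_sum]
  have : ∀ j, y j * (1 / (m+2 : ℝ) * ((if i.1 = j then (v.1 - (R i).u (v.2 i))^2 else 0) + (R i).E j (v.2 i))) =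
     (if i.1 = j then 1 / (m+2:ℝ) * (y j * (v.1 - (R i).u (v.2 i))^2) else 0) + 1 / (m+2:ℝ) * (y j * (R i).E j (v.2 i)) := by
    intro j; split_ifs <;> ring
  simp only [this, Finset.sum_add_distrib, Finset.sum_ite_eq, Finset.mem_univ, if_true]

lemma par_low (y r u w : ℝ) (h : 0 < y + r) : y * r / (y + r) * u^2 ≤ y * (u - w)^2 + r * w^2 := by
  rw [div_mul_eq_mul_div, div_le_iff₀ h]
  nlinarith [sq_nonneg ((y + r) * w - y * u)]

lemma par_att (y r : ℝ) (h : 0 < y + r) :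
    y * (1 - y / (y + r))^2 + r * (y / (y + r))^2 = y * r / (y + r) := by
  field_simp
  ring

lemma step_r {ι : Type} [DecidableEq ι] {m : ℕ} {S : Finset ι} {y : ι → ℝ} (h : Cn S (m+2) y)
    {i : ι} (hi : i ∈ S) :
    0 < y i + es (S.erase i) y (m+1) / es (S.erase i) y m ∧
    y i * (es (S.erase i) y (m+1) / es (S.erase i) y m) /
      (y i + es (S.erase i) y (m+1) / es (S.erase i) y m) =
      y i * es (S.erase i) y (m+1) / es S y (m+1) := by
  have hc := Cn_erase h hi
  have h0 := hc m (by omega)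
  have h1 := hc (m+1) (by omega)
  have h2 := h (m+1) (by omega)
  have e := es_erase hi y m
  have e2 : y i + es (S.erase i) y (m+1) / es (S.erase i) y m = es S y (m+1) / es (S.erase i) y m := by
    rw [e]; field_simp; ring
  rw [e2]
  refine ⟨by positivity, ?_⟩
  field_simp

lemma step_sum {ι : Type} [DecidableEq ι] {m : ℕ} {S : Finset ι} (y : ι → ℝ) :
    (1 / (m + 2 : ℝ)) * ∑ i : S, y i.1 * es (S.erase i.1) y (m+1) / es S y (m+1) =
      es S y (m+2) / es S y (m+1) := by
  rw [← Finset.sum_div, Finset.sum_coe_sort S (fun i => y i * es (S.erase i) y (m+1)), es_euler]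
  push_cast
  field_simp
  ring

theorem exists_rep {ι : Type} [Fintype ι] [DecidableEq ι] (m : ℕ) (S : Finset ι) (h : m + 1 ≤ S.card) :
    Nonempty (Rep m S) := by
  induction m generalizing S with
  | zero =>
    have hs : ∀ (y : ι → ℝ) (v : ℝ), ∑ j, y j * ((if j ∈ S then QuadraticMap.sq else 0 : QuadraticForm ℝ ℝ) v)
        = es S y 1 * v^2 := by
      intro y v
      rw [es_one, Finset.sum_mul, ← Finset.sum_subset (Finset.subset_univ S)]
      · refine Finset.sum_congr rfl fun i hi => ?_
        simp [hi, pow_two]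
      · intro i _ hi; simp [hi]
    refine ⟨{ V := ℝ, u := LinearMap.id, E := fun j => if j ∈ S then QuadraticMap.sq else 0,
              pos := ?_, low := ?_, att := ?_ }⟩
    · intro v hv
      have := hs (fun _ => 1) v
      simp only [one_mul] at this
      rw [this, es_one]
      simp
      have : 0 < S.card := by omega
      positivity
    · intro y hy v
      rw [hs, es_zero]; simp
    · intro y hy
      refine ⟨1, rfl, ?_⟩
      rw [hs, es_zero]; simp
  | succ m ih =>
    have R : ∀ i : S, Rep m (S.erase i.1) := fun i =>
      (ih (S.erase i.1) (by rw [Finset.card_erase_of_mem i.2]; omega)).some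
    refine ⟨{ V := ℝ × (∀ i : S, (R i).V), u := LinearMap.fst ℝ ℝ _, E := stepE R,
              pos := ?_, low := ?_, att := ?_ }⟩
    · intro v hv
      have := stepE_sum R (fun _ => 1) v
      simp only [one_mul] at this
      rw [this]
      refine mul_pos (by positivity) ?_
      have hnn : ∀ i : S, 0 ≤ ∑ j, (R i).E j (v.2 i) := by
        intro i
        by_cases h0 : v.2 i = 0
        · rw [h0]; simp
        · exact ((R i).pos _ h0).le
      have hnn2 : ∀ i ∈ (Finset.univ : Finset S), 0 ≤ (v.1 - (R i).u (v.2 i))^2 + ∑ j, (R i).E j (v.2 i) :=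
        fun i _ => add_nonneg (sq_nonneg _) (hnn i)
      refine lt_of_le_of_ne (Finset.sum_nonneg hnn2) fun hz => hv ?_
      rw [eq_comm, Finset.sum_eq_zero_iff_of_nonneg hnn2] at hz
      have h2 : ∀ i, v.2 i = 0 := by
        intro i
        by_contra h0
        have a := (R i).pos _ h0
        have b := hz i (Finset.mem_univ i)
        nlinarith [sq_nonneg (v.1 - (R i).u (v.2 i))]
      obtain ⟨i, hi⟩ : S.Nonempty := Finset.card_pos.1 (by omega)
      have b := hz ⟨i, hi⟩ (Finset.mem_univ _)
      rw [h2] at b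
      simp at b
      exact Prod.ext b (show v.2 = 0 from _root_.funext h2)
    · intro y hy v
      rw [stepE_sum, ← step_sum, mul_assoc, Finset.sum_mul]
      refine mul_le_mul_of_nonneg_left (Finset.sum_le_sum fun i _ => ?_) (by positivity)
      obtain ⟨h1, h2⟩ := step_r hy i.2
      rw [← h2]
      refine (par_low _ _ _ ((R i).u (v.2 i)) h1).trans ?_
      exact add_le_add le_rfl ((R i).low y (Cn_erase hy i.2) (v.2 i))
    · intro y hy
      choose w hw1 hw2 using fun i : S => (R i).att y (Cn_erase hy i.2)
      refine ⟨(1, fun i => (y i.1 / (y i.1 + es (S.erase i.1) y (m+1) / es (S.erase i.1) y m)) • w i), rfl, ?_⟩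
      rw [stepE_sum, ← step_sum]
      congr 1
      refine Finset.sum_congr rfl fun i _ => ?_
      obtain ⟨h1, h2⟩ := step_r hy i.2
      rw [← h2, ← par_att _ _ h1]
      simp only [map_smul, hw1, QuadraticMap.map_smul, smul_eq_mul, mul_one]
      congr 1
      rw [← hw2 i, Finset.sum_mul]
      refine Finset.sum_congr rfl fun j _ => ?_
      ring

end Polynomial

namespace Polynomial
set_option linter.unusedSectionVars false
variable {ι : Type} [Fintype ι] [DecidableEq ι]

lemma eval_Q (y : ι → ℝ) (t : ℝ) (k j : ℕ) (h : k + j = Fintype.card ι) :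
    (hasseDeriv k (∏ i, (X + C (y i)))).eval t = es Finset.univ (fun i => y i + t) j := by
  rw [← taylor_coeff, ← es_coeff Finset.univ _ j k (by simpa using h), taylor_apply, prod_comp]
  congr 1
  refine Finset.prod_congr rfl fun i _ => ?_
  simp
  ring

lemma coeff_Q (y : ι → ℝ) (k i j : ℕ) (h : i + k + j = Fintype.card ι) :
    (hasseDeriv k (∏ i, (X + C (y i)))).coeff i = ((i+k).choose k : ℝ) * es Finset.univ y j := by
  rw [hasseDeriv_coeff, es_coeff Finset.univ _ j _ (by simpa using h)]

lemma natDegree_P (y : ι → ℝ) : (∏ i, (X + C (y i))).natDegree = Fintype.card ι := by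
  rw [natDegree_prod_of_monic _ _ (fun i _ => monic_X_add_C _)]
  simp

lemma natDegree_Q (y : ι → ℝ) (k j : ℕ) (h : k + j = Fintype.card ι) :
    (hasseDeriv k (∏ i, (X + C (y i)))).natDegree = j := by
  rw [natDegree_hasseDeriv, natDegree_P]; omega

lemma prod_coeff_pos (s : Multiset ℝ) (hs : ∀ r ∈ s, r < 0) :
    ∀ k, 0 ≤ ((s.map (fun a => (X - C a : ℝ[X]))).prod).coeff k ∧
    (k ≤ s.card → 0 < ((s.map (fun a => (X - C a : ℝ[X]))).prod).coeff k) := by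
  induction s using Multiset.induction_on with
  | empty => intro k; simp [coeff_one]; split_ifs <;> simp_all
  | cons a s ih =>
    have ih := ih (fun r hr => hs r (Multiset.mem_cons_of_mem hr))
    have ha := hs a (Multiset.mem_cons_self a s)
    intro k
    simp only [Multiset.map_cons, Multiset.prod_cons, sub_mul, coeff_sub, coeff_C_mul, Multiset.card_cons]
    cases k with
    | zero =>
      have := (ih 0).2 (Nat.zero_le _)
      rw [mul_coeff_zero]
      simp only [coeff_X_zero, zero_mul, zero_sub]
      constructor
      · nlinarith
      · intro _; nlinarith
    | succ k =>
      rw [coeff_X_mul]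
      have h1 := ih k
      have h2 := ih (k+1)
      constructor
      · nlinarith
      · intro hk
        have := h1.2 (by omega)
        nlinarith

theorem Cn_of_ne (y : ι → ℝ) (m : ℕ) (hm : m ≤ Fintype.card ι)
    (h : ∀ t, 0 ≤ t → es Finset.univ (fun i => y i + t) m ≠ 0) : Cn Finset.univ m y := by
  obtain ⟨k, hk⟩ := Nat.exists_eq_add_of_le hm
  have hk' : k + m = Fintype.card ι := by omega
  have hs : (hasseDeriv k (∏ i, (X + C (y i)))).Splits :=
    splits_hasse (Splits.prod fun i _ => Splits.X_add_C _) k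
  have hd := natDegree_Q y k m hk'
  have hc := coeff_Q y k
  have hev := fun t => eval_Q y t k m hk'
  set q := hasseDeriv k (∏ i, (X + C (y i)))
  have hlead : 0 < q.leadingCoeff := by
    rw [leadingCoeff, hd, hc m 0 (by omega), es_zero, mul_one]
    exact_mod_cast Nat.choose_pos (by omega)
  have hroots : ∀ r ∈ q.roots, r < 0 := by
    intro r hr
    by_contra hcon
    push Not at hcon
    apply h r hcon
    rw [← hev]
    exact isRoot_of_mem_roots hr
  intro j hj
  have h1 := (prod_coeff_pos q.roots hroots (m - j)).2 (by rw [← hs.natDegree_eq_card_roots, hd]; omega)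
  have h2 : 0 < q.coeff (m-j) := by
    rw [hs.eq_prod_roots, coeff_C_mul]
    exact mul_pos hlead h1
  rw [hc (m-j) j (by omega)] at h2
  have h3 : (0:ℝ) ≤ ((m-j+k).choose k : ℝ) := Nat.cast_nonneg _
  by_contra hcon
  push Not at hcon
  nlinarith

/-- expansion of the shifted elementary symmetric polynomial -/
lemma es_shift (y : ι → ℝ) (t : ℝ) (k m : ℕ) (h : k + m = Fintype.card ι) :
    es Finset.univ (fun i => y i + t) m =
      ∑ i ∈ Finset.range (m+1), ((i+k).choose k : ℝ) * es Finset.univ y (m-i) * t^i := by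
  rw [← eval_Q y t k m h, eval_eq_sum_range, natDegree_Q y k m h]
  refine Finset.sum_congr rfl fun i hi => ?_
  rw [Finset.mem_range] at hi
  rw [coeff_Q y k i (m-i) (by omega)]

/-- closedness of the cone in the nonvanishing locus -/
theorem Cn_of_nonneg (y : ι → ℝ) (m : ℕ) (hm : m ≤ Fintype.card ι)
    (h : ∀ j ≤ m, 0 ≤ es Finset.univ y j) (h0 : es Finset.univ y m ≠ 0) : Cn Finset.univ m y := by
  obtain ⟨k, hk⟩ := Nat.exists_eq_add_of_le hm
  refine Cn_of_ne y m hm fun t ht => ne_of_gt ?_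
  rw [es_shift y t k m (by omega), Finset.sum_range_succ']
  have : 0 < es Finset.univ y m := lt_of_le_of_ne (h m le_rfl) h0.symm
  refine add_pos_of_nonneg_of_pos (Finset.sum_nonneg fun i _ => ?_) ?_
  · have := h (m - (i+1)) (by omega)
    positivity
  · simpa using this

theorem Cn_shift (y : ι → ℝ) (m : ℕ) (hm : m ≤ Fintype.card ι) (h : Cn Finset.univ m y) (t : ℝ)
    (ht : 0 ≤ t) : Cn Finset.univ m (fun i => y i + t) := by
  intro j hj
  obtain ⟨k, hk⟩ := Nat.exists_eq_add_of_le (hj.trans hm)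
  rw [es_shift y t k j (by omega), Finset.sum_range_succ']
  refine add_pos_of_nonneg_of_pos (Finset.sum_nonneg fun i _ => ?_) ?_
  · have := h (j - (i+1)) (by omega)
    positivity
  · simpa using h j hj

lemma es_smul (S : Finset ι) (y : ι → ℝ) (c : ℝ) (j : ℕ) :
    es S (fun i => c * y i) j = c^j * es S y j := by
  unfold es
  have : (∏ i ∈ S, (1 + C (c * y i) * X) : ℝ[X]) = (∏ i ∈ S, (1 + C (y i) * X)).comp (C c * X) := by
    rw [prod_comp]
    refine Finset.prod_congr rfl fun i _ => ?_
    simp; ring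
  rw [this, comp_C_mul_X_coeff, mul_comm]

lemma es_continuous (S : Finset ι) (j : ℕ) : Continuous (fun y : ι → ℝ => es S y j) := by
  induction S using Finset.induction_on generalizing j with
  | empty => simp only [es, Finset.prod_empty]; exact continuous_const
  | insert a S ha ih =>
    cases j with
    | zero => simp only [es_zero]; exact continuous_const
    | succ j =>
      simp only [es_insert ha]
      have := ih j
      have := ih (j+1)
      fun_prop

lemma Cn_one (m : ℕ) (hm : m ≤ Fintype.card ι) : Cn (Finset.univ : Finset ι) m (fun _ => 1) := by
  refine Cn_of_ne _ m hm fun t ht => ?_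
  have e : (fun _ : ι => (1:ℝ) + t) = fun i => (1 + t) * (fun _ => (1:ℝ)) i := by simp
  rw [e, es_smul]
  refine mul_ne_zero (by positivity) ?_
  unfold es
  simp only [map_one, one_mul, Finset.prod_const, Finset.card_univ]
  rw [coeff_one_add_X_pow]
  exact_mod_cast (Nat.choose_pos hm).ne'

/-- if `e_m(z) = 0` and `z + ε ∈ C_m` for `ε > 0` then the ratio is small -/
lemma ratio_small (z : ι → ℝ) (m k : ℕ) (hk : k + (m + 1) = Fintype.card ι)
    (h0 : es Finset.univ z (m+1) = 0) (hn : ∀ j ≤ m + 1, 0 ≤ es Finset.univ z j) (ε : ℝ) (hε : 0 < ε) :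
    es Finset.univ (fun i => z i + ε) (m+1) ≤ ε * (k+1) * es Finset.univ (fun i => z i + ε) m := by
  rw [es_shift z ε k (m+1) (by omega), es_shift z ε (k+1) m (by omega), Finset.sum_range_succ']
  simp only [Nat.sub_zero, h0, mul_zero, zero_mul, add_zero, Finset.mul_sum]
  refine Finset.sum_le_sum fun i hi => ?_
  rw [Finset.mem_range] at hi
  rw [show m + 1 - (i+1) = m - i by omega]
  have h1 := hn (m-i) (by omega)
  have h2 : ((i+1+k).choose k : ℝ) ≤ (k+1) * ((i+(k+1)).choose (k+1) : ℝ) := by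
    have := Nat.choose_succ_right_eq (i+1+k) k
    have e : (i+1+k).choose k ≤ (k+1) * (i+(k+1)).choose (k+1) := by
      rw [show i + (k+1) = i+1+k by ring, mul_comm, this]
      rw [show i + 1 + k - k = i+1 by omega]
      nlinarith [Nat.zero_le ((i+1+k).choose k * i)]
    exact_mod_cast e
  have h3 : 0 ≤ es Finset.univ z (m-i) * ε^(i+1) := by positivity
  calc _ = ((i+1+k).choose k : ℝ) * (es Finset.univ z (m-i) * ε^(i+1)) := by ring
    _ ≤ (k+1) * ((i+(k+1)).choose (k+1) : ℝ) * (es Finset.univ z (m-i) * ε^(i+1)) :=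
      mul_le_mul_of_nonneg_right h2 h3
    _ = _ := by ring

theorem psd_Cn {m : ℕ} (hm : m + 1 ≤ Fintype.card ι) (R : Rep m (Finset.univ : Finset ι)) (y : ι → ℝ)
    (hy : ∀ v, 0 ≤ ∑ j, y j * R.E j v) (t : ℝ) (ht : 0 < t) :
    Cn Finset.univ (m+1) (fun i => y i + t) := by
  obtain ⟨k, hk⟩ := Nat.exists_eq_add_of_le hm
  have hk' : k + (m+1) = Fintype.card ι := by omega
  have hev := fun t => eval_Q y t k (m+1) hk'
  have hd := natDegree_Q y k (m+1) hk'
  set q := hasseDeriv k (∏ i, (X + C (y i)))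
  have hq0 : q ≠ 0 := by intro h; rw [h] at hd; simp at hd
  by_cases hne : (q.roots.toFinset.filter (fun r => t ≤ r)).Nonempty
  · exfalso
    obtain ⟨t0, ht0, hmax⟩ := Finset.exists_max_image _ id hne
    simp only [Finset.mem_filter, Multiset.mem_toFinset, id] at ht0 hmax
    have hC : ∀ s, t0 < s → Cn Finset.univ (m+1) (fun i => y i + s) := by
      intro s hs
      refine Cn_of_ne _ _ hm fun r hr hz => ?_
      have hz' : es Finset.univ (fun i => y i + (s + r)) (m+1) = 0 := by
        simpa only [add_assoc] using hz
      rw [← hev] at hz'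
      have := hmax (s+r) ⟨(mem_roots hq0).2 hz', by linarith⟩
      linarith
    have hz0 : es Finset.univ (fun i => y i + t0) (m+1) = 0 := by
      rw [← hev]; exact isRoot_of_mem_roots ht0.1
    have hnn : ∀ j ≤ m+1, 0 ≤ es Finset.univ (fun i => y i + t0) j := by
      intro j hj
      have hcont : Continuous (fun s : ℝ => es Finset.univ (fun i => y i + s) j) :=
        (es_continuous Finset.univ j).comp (by fun_prop)
      have htd : Filter.Tendsto (fun s : ℝ => es Finset.univ (fun i => y i + s) j)
          (nhdsWithin t0 (Set.Ioi t0)) (nhds (es Finset.univ (fun i => y i + t0) j)) :=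
        hcont.continuousAt.tendsto.mono_left nhdsWithin_le_nhds
      refine ge_of_tendsto htd ?_
      filter_upwards [self_mem_nhdsWithin] with s hs
      exact (hC s hs j hj).le
    have h1 := Cn_one (ι := ι) (m+1) hm
    set c := es (Finset.univ : Finset ι) (fun _ => 1) (m+1) / es (Finset.univ : Finset ι) (fun _ => 1) m with hc
    have hcpos : 0 < c := div_pos (h1 _ le_rfl) (h1 _ (by omega))
    have ht0pos : 0 < t0 := by linarith [ht0.2]
    have hkey : ∀ ε, 0 < ε → t0 * c ≤ ε * (k+1) := by
      intro ε hε
      have hCe := hC (t0 + ε) (by linarith)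
      obtain ⟨v, hv1, hv2⟩ := R.att _ hCe
      have hs := ratio_small (fun i => y i + t0) m k hk' hz0 hnn ε hε
      simp only [add_assoc] at hs
      have hr : es Finset.univ (fun i => y i + (t0 + ε)) (m+1) / es Finset.univ (fun i => y i + (t0 + ε)) m ≤ ε * (k+1) := by
        rw [div_le_iff₀ (hCe m (by omega))]; exact hs
      have hl := R.low _ h1 v
      rw [hv1, ← hc] at hl
      have hsplit : ∑ j, (y j + (t0 + ε)) * R.E j v = ∑ j, y j * R.E j v + (t0+ε) * ∑ j, 1 * R.E j v := by
        rw [Finset.mul_sum, ← Finset.sum_add_distrib]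
        exact Finset.sum_congr rfl fun j _ => by ring
      have hyv := hy v
      rw [hsplit] at hv2
      nlinarith [mul_pos hε hcpos]
    have hkp : (0:ℝ) < k + 1 := by positivity
    have := hkey (t0 * c / (2 * (k+1))) (by positivity)
    have e : t0 * c / (2 * (k+1)) * (k+1) = t0 * c / 2 := by field_simp
    rw [e] at this
    nlinarith [mul_pos ht0pos hcpos]
  · refine Cn_of_ne _ _ hm fun r hr hz => hne ⟨t + r, ?_⟩
    have hz' : es Finset.univ (fun i => y i + (t + r)) (m+1) = 0 := by
      simpa only [add_assoc] using hz
    rw [← hev] at hz'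
    simp only [Finset.mem_filter, Multiset.mem_toFinset]
    exact ⟨(mem_roots hq0).2 hz', by linarith⟩

end Polynomial

namespace Polynomial

lemma derivative_line {n : ℕ} (e x : Fin n → ℝ) (p : MvPolynomial (Fin n) ℝ) :
    derivative (MvPolynomial.aeval (fun i => C (x i) + C (e i) * X) p : ℝ[X]) =
      MvPolynomial.aeval (fun i => C (x i) + C (e i) * X) (dirDeriv e p) := by
  unfold dirDeriv
  induction p using MvPolynomial.induction_on with
  | C a =>
    simp [← Polynomial.C_eq_algebraMap]
  | add p q hp hq =>
    simp only [map_add, hp, hq, mul_add, Finset.sum_add_distrib]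
  | mul_X p i hp =>
    have h1 : ∑ j, MvPolynomial.C (e j) * MvPolynomial.pderiv j (p * MvPolynomial.X i) =
        (∑ j, MvPolynomial.C (e j) * MvPolynomial.pderiv j p) * MvPolynomial.X i +
          p * MvPolynomial.C (e i) := by
      have h2 : ∀ j, MvPolynomial.C (e j) * MvPolynomial.pderiv j (p * MvPolynomial.X i) =
          MvPolynomial.C (e j) * MvPolynomial.pderiv j p * MvPolynomial.X i +
            (if j = i then p * MvPolynomial.C (e j) else 0) := by
        intro j
        rw [MvPolynomial.pderiv_mul, MvPolynomial.pderiv_X]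
        split_ifs with h
        · subst h
          rw [Pi.single_eq_same]
          ring
        · rw [Pi.single_eq_of_ne (Ne.symm h)]
          ring
      simp only [h2, Finset.sum_add_distrib, Finset.sum_mul, Finset.sum_ite_eq', Finset.mem_univ,
        if_true]
    rw [h1, map_mul, derivative_mul, hp, map_add, map_mul, map_mul, MvPolynomial.aeval_X,
      MvPolynomial.aeval_C]
    simp

lemma eval_line {n : ℕ} (e x : Fin n → ℝ) (p : MvPolynomial (Fin n) ℝ) :
    (MvPolynomial.aeval (fun i => C (x i) + C (e i) * X) p : ℝ[X]).eval 0 = MvPolynomial.eval x p := by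
  induction p using MvPolynomial.induction_on with
  | C a => simp [← Polynomial.C_eq_algebraMap]
  | add p q hp hq => simp [hp, hq]
  | mul_X p i hp => simp [hp]

lemma iterate_line {n : ℕ} (e x : Fin n → ℝ) (p : MvPolynomial (Fin n) ℝ) (k : ℕ) :
    derivative^[k] (MvPolynomial.aeval (fun i => C (x i) + C (e i) * X) p : ℝ[X]) =
      MvPolynomial.aeval (fun i => C (x i) + C (e i) * X) ((fun p => dirDeriv e p)^[k] p) := by
  induction k generalizing p with
  | zero => rfl
  | succ k ih => rw [Function.iterate_succ_apply, Function.iterate_succ_apply, derivative_line, ih]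

lemma eval_D {n d : ℕ} (ℓ : Fin d → (Fin n → ℝ)) (e : Fin n → ℝ)
    (ha : ∀ j, ∑ i, ℓ j i * e i ≠ 0) (k m : ℕ) (hk : k + m = d) (x : Fin n → ℝ) :
    MvPolynomial.eval x ((fun p => dirDeriv e p)^[k]
      (∏ j, (∑ i, MvPolynomial.C (ℓ j i) * MvPolynomial.X i))) =
    (k.factorial * ∏ j, ∑ i, ℓ j i * e i) *
      es Finset.univ (fun j => (∑ i, ℓ j i * x i) / (∑ i, ℓ j i * e i)) m := by
  rw [← eval_line e, ← iterate_line, ← coeff_zero_eq_eval_zero, coeff_iterate_derivative, map_prod]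
  have h1 : ∀ j, (MvPolynomial.aeval (fun i => C (x i) + C (e i) * X)
      (∑ i, MvPolynomial.C (ℓ j i) * MvPolynomial.X i : MvPolynomial (Fin n) ℝ) : ℝ[X]) =
      C (∑ i, ℓ j i * e i) * (X + C ((∑ i, ℓ j i * x i) / (∑ i, ℓ j i * e i))) := by
    intro j
    rw [mul_add, ← C_mul, mul_div_cancel₀ _ (ha j)]
    simp only [map_sum, map_mul, MvPolynomial.aeval_X, MvPolynomial.aeval_C, ← Polynomial.C_eq_algebraMap,
      mul_add, Finset.sum_add_distrib, Finset.sum_mul]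
    rw [add_comm]
    congr 1
    refine Finset.sum_congr rfl fun i _ => ?_
    ring
  rw [Finset.prod_congr rfl fun j _ => h1 j, Finset.prod_mul_distrib, ← map_prod, coeff_C_mul,
    es_coeff Finset.univ _ m (0+k) (by simp; omega)]
  simp [Nat.descFactorial_self]
  ring

/-- the Gram matrix of a quadratic form in a basis -/
noncomputable def gram {V : Type} [AddCommGroup V] [Module ℝ V] {N : ℕ} (b : Module.Basis (Fin N) ℝ V)
    (Q : QuadraticForm ℝ V) : Matrix (Fin N) (Fin N) ℝ :=
  Matrix.of fun p q => QuadraticMap.associated (R := ℝ) Q (b p) (b q)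

lemma gram_symm {V : Type} [AddCommGroup V] [Module ℝ V] {N : ℕ} (b : Module.Basis (Fin N) ℝ V)
    (Q : QuadraticForm ℝ V) : (gram b Q).IsSymm := by
  ext p q
  exact QuadraticMap.associated_isSymm ℝ Q _ _

lemma gram_quad {V : Type} [AddCommGroup V] [Module ℝ V] {N : ℕ} (b : Module.Basis (Fin N) ℝ V)
    (Q : QuadraticForm ℝ V) (z : Fin N → ℝ) :
    z ⬝ᵥ ((gram b Q).mulVec z) = Q (b.equivFun.symm z) := by
  rw [← QuadraticMap.associated_eq_self_apply ℝ Q, Module.Basis.equivFun_symm_apply]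
  simp only [dotProduct, Matrix.mulVec, gram, Matrix.of_apply, map_sum, LinearMap.sum_apply, map_smul,
    LinearMap.smul_apply, smul_eq_mul, Finset.mul_sum]
  rw [Finset.sum_comm]
  refine Finset.sum_congr rfl fun p _ => Finset.sum_congr rfl fun q _ => ?_
  ring

lemma gram_pencil {n d N : ℕ} {V : Type} [AddCommGroup V] [Module ℝ V] (b : Module.Basis (Fin N) ℝ V)
    (E : Fin d → QuadraticForm ℝ V) (L : Fin d → Fin n → ℝ) (x : Fin n → ℝ) (z : Fin N → ℝ) :
    z ⬝ᵥ ((∑ i, x i • ∑ j, L j i • gram b (E j)).mulVec z) =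
      ∑ j, (∑ i, L j i * x i) * E j (b.equivFun.symm z) := by
  simp only [Matrix.sum_mulVec, Matrix.smul_mulVec, dotProduct_sum, dotProduct_smul, gram_quad,
    smul_eq_mul, Finset.mul_sum, Finset.sum_mul]
  rw [Finset.sum_comm]
  refine Finset.sum_congr rfl fun j _ => Finset.sum_congr rfl fun i _ => ?_
  ring

lemma pencil_symm {d N : ℕ} {V : Type} [AddCommGroup V] [Module ℝ V] (b : Module.Basis (Fin N) ℝ V)
    (E : Fin d → QuadraticForm ℝ V) (L : Fin d → ℝ) :
    (∑ j, L j • gram b (E j)).IsSymm := by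
  unfold Matrix.IsSymm
  rw [Matrix.transpose_sum]
  refine Finset.sum_congr rfl fun j _ => ?_
  rw [Matrix.transpose_smul, gram_symm]

/-- The cone of positivity: the closure of the component is the PSD set. -/
theorem cone_eq {n d : ℕ} (Y : (Fin n → ℝ) →ₗ[ℝ] (Fin d → ℝ)) (e : Fin n → ℝ) (he : Y e = fun _ => 1)
    (m : ℕ) (hm : m + 1 ≤ d) (R : Rep m (Finset.univ : Finset (Fin d))) :
    closure (connectedComponentIn {x | es Finset.univ (Y x) (m+1) ≠ 0} e) =
      {x | ∀ v, 0 ≤ ∑ j, Y x j * R.E j v} := by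
  have hm' : m + 1 ≤ Fintype.card (Fin d) := by simpa using hm
  have hYc : Continuous Y := Y.continuous_of_finiteDimensional
  set U : Set (Fin n → ℝ) := {x | Cn Finset.univ (m+1) (Y x)} with hU
  have heU : e ∈ U := by
    simp only [hU, Set.mem_ofPred_eq, he]
    exact Cn_one (m+1) hm'
  have hadd : ∀ x t, Y (x + t • e) = fun i => Y x i + t := by
    intro x t; ext i; simp [he]
  have hUF : U ⊆ {x | es Finset.univ (Y x) (m+1) ≠ 0} := fun x hx => (hx (m+1) le_rfl).ne'
  have hsm : ∀ x ∈ U, ∀ c : ℝ, 0 < c → c • x ∈ U := by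
    intro x hx c hc j hj
    have : Y (c • x) = fun i => c * Y x i := by ext i; simp
    rw [this, es_smul]
    exact mul_pos (pow_pos hc j) (hx j hj)
  have hstar : StarConvex ℝ e U := by
    intro x hx a b ha hb hab
    rcases hb.eq_or_lt with h0 | hb
    · subst h0
      have : a = 1 := by linarith
      subst this
      simpa using heU
    · have h1 : x + (a / b) • e ∈ U := by
        simp only [hU, Set.mem_ofPred_eq, hadd]
        exact Cn_shift _ _ hm' hx _ (by positivity)
      have h2 := hsm _ h1 b hb
      have : b • (x + (a / b) • e) = a • e + b • x := by
        rw [smul_add, smul_smul, mul_div_cancel₀ _ hb.ne', add_comm]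
      rwa [this] at h2
  have hopen : IsOpen U := by
    have : U = ⋂ j ∈ Set.Iic (m+1), {x | 0 < es Finset.univ (Y x) j} := by
      ext x; simp [hU, Cn]
    rw [this]
    refine (Set.finite_Iic (m+1)).isOpen_biInter fun j _ => ?_
    exact isOpen_lt continuous_const ((es_continuous Finset.univ j).comp hYc)
  have hclos : ∀ x ∈ closure U, ∀ j ≤ m+1, 0 ≤ es Finset.univ (Y x) j := by
    intro x hx j hj
    have hcl : IsClosed {x | 0 ≤ es Finset.univ (Y x) j} :=
      isClosed_le continuous_const ((es_continuous Finset.univ j).comp hYc)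
    exact closure_minimal (fun z hz => (hz j hj).le) hcl hx
  have hcomp : connectedComponentIn {x | es Finset.univ (Y x) (m+1) ≠ 0} e = U := by
    refine Set.Subset.antisymm ?_ ?_
    · refine isPreconnected_connectedComponentIn.subset_of_closure_inter_subset hopen
        ⟨e, mem_connectedComponentIn (hUF heU), heU⟩ ?_
      rintro x ⟨hx1, hx2⟩
      exact Cn_of_nonneg _ _ hm' (hclos x hx1) (connectedComponentIn_subset _ _ hx2)
    · exact (hstar.isPathConnected heU).isConnected.isPreconnected.subset_connectedComponentIn heU hUF
  rw [hcomp]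
  refine Set.Subset.antisymm ?_ ?_
  · refine closure_minimal ?_ ?_
    · intro x hx v
      refine le_trans ?_ (R.low _ hx v)
      have h1 := hx (m+1) le_rfl
      have h2 := hx m (by omega)
      positivity
    · simp only [Set.ofPred_forall]
      refine isClosed_iInter fun v => isClosed_le continuous_const ?_
      refine continuous_finsetSum _ fun j _ => ?_
      exact ((continuous_apply j).comp hYc).mul continuous_const
  · intro x hx
    have htd : Filter.Tendsto (fun t : ℝ => x + t • e) (nhdsWithin 0 (Set.Ioi 0)) (nhds x) := by
      have hc : Continuous (fun t : ℝ => x + t • e) := by fun_prop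
      have := hc.continuousAt.tendsto (x := (0:ℝ))
      simp only [zero_smul, add_zero] at this
      exact this.mono_left nhdsWithin_le_nhds
    refine mem_closure_of_tendsto htd ?_
    filter_upwards [self_mem_nhdsWithin] with t ht
    simp only [hU, Set.mem_ofPred_eq, hadd]
    exact psd_Cn hm' R (Y x) hx t ht

end Polynomial

/-- Derivative cones of polyhedral cones are spectrahedral: if `h = ℓ_1 ⋯ ℓ_d` is a product
of linear forms with `h(e) ≠ 0`, then for `1 ≤ k ≤ d-1` the cone `Λ₊(D_e^k h, e)` is
spectrahedral. -/
theorem derivative_cone_spectrahedral {n d : ℕ} (ℓ : Fin d → (Fin n → ℝ)) (e : Fin n → ℝ)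
    (he : eval e (∏ j, (∑ i, C (ℓ j i) * X i)) ≠ 0)
    (k : ℕ) (hk : 1 ≤ k) (hkd : k ≤ d - 1) :
    ∃ (N : ℕ) (A : Fin n → Matrix (Fin N) (Fin N) ℝ) (y : Fin n → ℝ),
      (∀ i, (A i).IsSymm) ∧ (∑ i, y i • A i).PosDef ∧
      hypCone ((fun p => dirDeriv e p)^[k] (∏ j, (∑ i, C (ℓ j i) * X i))) e =
        {x : Fin n → ℝ | (∑ i, x i • A i).PosSemidef} := by
  
  have ha : ∀ j, ∑ i, ℓ j i * e i ≠ 0 := by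
    intro j
    rw [eval_prod] at he
    have := Finset.prod_ne_zero_iff.1 he j (Finset.mem_univ j)
    simpa using this
  obtain ⟨m, hm⟩ : ∃ m, k + (m + 1) = d := ⟨d - k - 1, by omega⟩
  obtain ⟨R⟩ := Polynomial.exists_rep m (Finset.univ : Finset (Fin d)) (by simp; omega)
  set L : Fin d → Fin n → ℝ := fun j i => ℓ j i / ∑ i, ℓ j i * e i with hL
  let Y : (Fin n → ℝ) →ₗ[ℝ] (Fin d → ℝ) := Matrix.mulVecLin (Matrix.of L)
  have hY : ∀ x j, Y x j = ∑ i, L j i * x i := fun x j => rfl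
  have hY2 : ∀ x, Y x = fun j => (∑ i, ℓ j i * x i) / (∑ i, ℓ j i * e i) := by
    intro x
    funext j
    rw [hY, Finset.sum_div]
    refine Finset.sum_congr rfl fun i _ => ?_
    simp only [hL]
    ring
  have hYe : Y e = fun _ => 1 := by
    rw [hY2]
    funext j
    exact div_self (ha j)
  let b := Module.finBasis ℝ R.V
  have hherm : ∀ x : Fin n → ℝ, (∑ i, x i • ∑ j, L j i • Polynomial.gram b (R.E j)).IsHermitian := by
    intro x
    rw [Matrix.IsHermitian, Matrix.conjTranspose_eq_transpose_of_trivial, Matrix.transpose_sum]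
    refine Finset.sum_congr rfl fun i _ => ?_
    rw [Matrix.transpose_smul, Polynomial.pencil_symm]
  refine ⟨Module.finrank ℝ R.V, fun i => ∑ j, L j i • Polynomial.gram b (R.E j), e, ?_, ?_, ?_⟩
  · intro i
    exact Polynomial.pencil_symm b R.E fun j => L j i
  · rw [Matrix.posDef_iff_dotProduct_mulVec]
    refine ⟨hherm e, fun z hz => ?_⟩
    rw [star_trivial, Polynomial.gram_pencil]
    simp only [← hY, hYe, one_mul]
    exact R.pos _ ((LinearEquiv.map_ne_zero_iff _).2 hz)
  · have hset : {x | eval x ((fun p => dirDeriv e p)^[k] (∏ j, (∑ i, C (ℓ j i) * X i))) ≠ 0} =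
        {x | Polynomial.es Finset.univ (Y x) (m+1) ≠ 0} := by
      ext x
      simp only [Set.mem_ofPred_eq]
      rw [Polynomial.eval_D ℓ e ha k (m+1) hm x, ← hY2]
      have hc : ((k.factorial : ℝ) * ∏ j, ∑ i, ℓ j i * e i) ≠ 0 :=
        mul_ne_zero (by exact_mod_cast k.factorial_ne_zero) (Finset.prod_ne_zero_iff.2 fun j _ => ha j)
      simp only [ne_eq, mul_eq_zero, hc, false_or]
    unfold hypCone
    rw [hset, Polynomial.cone_eq Y e hYe m (by omega) R]
    ext x
    simp only [Set.mem_ofPred_eq]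
    rw [Matrix.posSemidef_iff_dotProduct_mulVec]
    constructor
    · intro h
      refine ⟨hherm x, fun z => ?_⟩
      rw [star_trivial, Polynomial.gram_pencil]
      exact h _
    · rintro ⟨_, h⟩ v
      have := h (b.equivFun v)
      rw [star_trivial, Polynomial.gram_pencil, LinearEquiv.symm_apply_apply] at this
      exact this
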